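/- Rényi-divergence difference bounded by trace distance: Let ρ₀, ρ₁, σ be states on ℂ^d such that the support of ρ₁ is contained in the support of σ, let α ∈ (0,1) and set β := 2 − α. Then D_β(ρ₀‖σ) − D_α(ρ₁‖σ) ≥ (2/(1−α)) log(1 − ½‖ρ₀ − ρ₁‖₁) ≥ (2/(1−α)) log(1 − P(ρ₀,ρ₁)) in the extended reals. -/

import Mathlib

open scoped Kronecker ComplexOrder

noncomputable section

namespace QCD

attribute [local instance] Classical.propDecidable

variable {n m : Type} [Fintype n] [DecidableEq n] [Fintype m] [DecidableEq m]

/-- The real part of the trace of a complex matrix. -/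
def rtr (A : Matrix n n ℂ) : ℝ := (A.trace).re

/-- A quantum state: positive semidefinite with trace one. -/
def IsState (ρ : Matrix n n ℂ) : Prop := ρ.PosSemidef ∧ ρ.trace = 1

/-- Loewner order: `A ≤ B` iff `B - A` is positive semidefinite. -/
def loewnerLE (A B : Matrix n n ℂ) : Prop := (B - A).PosSemidef

/-- Support containment (for PSD matrices): `ker σ ⊆ ker ρ`. -/
def SuppLE (ρ σ : Matrix n n ℂ) : Prop := ∀ v : n → ℂ, σ.mulVec v = 0 → ρ.mulVec v = 0

/-- Functional calculus for Hermitian matrices (junk value `0` otherwise). -/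
def matFun (f : ℝ → ℝ) (A : Matrix n n ℂ) : Matrix n n ℂ :=
  if hA : A.IsHermitian then
    (hA.eigenvectorUnitary : Matrix n n ℂ) *
      Matrix.diagonal (fun i => (f (hA.eigenvalues i) : ℂ)) *
      (star (hA.eigenvectorUnitary : Matrix n n ℂ))
  else 0

/-- Matrix square root via functional calculus. -/
def msqrt (A : Matrix n n ℂ) : Matrix n n ℂ := matFun Real.sqrt A

/-- Matrix real power taken on the support (`0 ^ t := 0`). -/
def mpow (A : Matrix n n ℂ) (t : ℝ) : Matrix n n ℂ :=
  matFun (fun x => if x = 0 then 0 else x ^ t) A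

/-- Matrix base-2 logarithm on the support. -/
def mlog (A : Matrix n n ℂ) : Matrix n n ℂ := matFun (Real.logb 2) A

/-- Positive part of a Hermitian matrix. -/
def mposPart (A : Matrix n n ℂ) : Matrix n n ℂ := matFun (fun x => max x 0) A

/-- Trace norm. -/
def traceNorm (A : Matrix n m ℂ) : ℝ := rtr (msqrt (A.conjTranspose * A))

/-- Base-2 logarithm as an extended real (`⊥` on nonpositive input). -/
def elog (x : ℝ) : EReal := if x ≤ 0 then ⊥ else ((Real.logb 2 x : ℝ) : EReal)

/-- Base-2 logarithm of an extended real. -/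
def elogE (x : EReal) : EReal := if x = ⊤ then ⊤ else elog x.toReal

/-- `2 ^ x` for an extended real `x`. -/
def epow2 (x : EReal) : EReal :=
  if x = ⊤ then ⊤ else if x = ⊥ then 0 else ((((2:ℝ) ^ x.toReal : ℝ)) : EReal)

/-- Umegaki relative entropy (base 2), `⊤` if the support condition fails. -/
def relEntropy (ρ σ : Matrix n n ℂ) : EReal :=
  if SuppLE ρ σ then ((rtr (ρ * (mlog ρ - mlog σ)) : ℝ) : EReal) else ⊤

/-- Petz–Rényi divergence (base 2). -/
def petzRenyi (α : ℝ) (ρ σ : Matrix n n ℂ) : EReal :=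
  if 1 < α ∧ ¬ SuppLE ρ σ then ⊤
  else (((α - 1)⁻¹ : ℝ) : EReal) * elog (rtr (mpow ρ α * mpow σ (1 - α)))

/-- Geometric (maximal) Rényi divergence (base 2). -/
def geomRenyi (α : ℝ) (ρ σ : Matrix n n ℂ) : EReal :=
  if SuppLE ρ σ then
    (((α - 1)⁻¹ : ℝ) : EReal) *
      elog (rtr (σ * mpow (mpow σ (-(1/2 : ℝ)) * ρ * mpow σ (-(1/2 : ℝ))) α))
  else ⊤

/-- Max-relative entropy (base 2). -/
def dMax (ρ σ : Matrix n n ℂ) : EReal :=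
  sInf {x : EReal | ∃ lam : ℝ, x = (lam : EReal) ∧ loewnerLE ρ ((((2:ℝ) ^ lam : ℝ) : ℂ) • σ)}

/-- Uhlmann fidelity. -/
def fidelity (ρ σ : Matrix n n ℂ) : ℝ := (rtr (msqrt (msqrt σ * ρ * msqrt σ))) ^ 2

/-- Sine (purified) distance. -/
def sineDist (ρ σ : Matrix n n ℂ) : ℝ := Real.sqrt (1 - fidelity ρ σ)

/-- Smoothed max-relative entropy: smoothing over states in the sine-distance ball. -/
def dMaxSmooth (δ : ℝ) (ρ σ : Matrix n n ℂ) : EReal :=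
  ⨅ (ρ' : Matrix n n ℂ) (_ : IsState ρ' ∧ sineDist ρ ρ' ≤ δ), dMax ρ' σ

/-- Hypothesis testing divergence (base 2). -/
def dH (ε : ℝ) (ρ σ : Matrix n n ℂ) : EReal :=
  - elog (sInf {x : ℝ | ∃ T : Matrix n n ℂ,
      T.PosSemidef ∧ ((1 : Matrix n n ℂ) - T).PosSemidef ∧ 1 - ε ≤ rtr (T * ρ) ∧ x = rtr (T * σ)})

/-- The quantity `c_γ(ρ‖σ)`. -/
def cGamma (γ : ℝ) (ρ σ : Matrix n n ℂ) : EReal :=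
  ((γ⁻¹ : ℝ) : EReal) *
    elogE (epow2 ((γ : ℝ) * petzRenyi (1 + γ) ρ σ) +
           epow2 (((-γ : ℝ) : EReal) * petzRenyi (1 - γ) ρ σ) + 1)

/-- Binary entropy (base 2). -/
def binEnt (x : ℝ) : ℝ := -(x * Real.logb 2 x) - (1 - x) * Real.logb 2 (1 - x)

/-- Action of `id_k ⊗ Φ` on block matrices. -/
def blockApply {k : Type} (Φ : Matrix n n ℂ →ₗ[ℂ] Matrix m m ℂ)
    (M : Matrix (k × n) (k × n) ℂ) : Matrix (k × m) (k × m) ℂ :=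
  Matrix.of fun p q => Φ (Matrix.of fun a b => M (p.1, a) (q.1, b)) p.2 q.2

/-- Action of `Φ ⊗ id_k` on block matrices. -/
def blockApplyRight {k : Type} (Φ : Matrix n n ℂ →ₗ[ℂ] Matrix m m ℂ)
    (M : Matrix (n × k) (n × k) ℂ) : Matrix (m × k) (m × k) ℂ :=
  Matrix.of fun p q => Φ (Matrix.of fun a b => M (a, p.2) (b, q.2)) p.1 q.1

/-- Quantum channel: trace preserving and completely positive. -/
def IsQChannel (Φ : Matrix n n ℂ →ₗ[ℂ] Matrix m m ℂ) : Prop :=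
  (∀ M : Matrix n n ℂ, (Φ M).trace = M.trace) ∧
  (∀ k : ℕ, 1 ≤ k → ∀ M : Matrix (Fin k × n) (Fin k × n) ℂ, M.PosSemidef →
    (blockApply Φ M).PosSemidef)

/-- `id_k ⊗ Φ` as a linear map. -/
def blockApplyL (k : Type) (Φ : Matrix n n ℂ →ₗ[ℂ] Matrix m m ℂ) :
    Matrix (k × n) (k × n) ℂ →ₗ[ℂ] Matrix (k × m) (k × m) ℂ where
  toFun := blockApply Φ
  map_add' M N := by
    ext p q
    show Φ (Matrix.of fun a b => (M + N) (p.1, a) (q.1, b)) p.2 q.2 = _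
    have h : (Matrix.of fun a b => (M + N) (p.1, a) (q.1, b)) =
        (Matrix.of fun a b => M (p.1, a) (q.1, b)) +
          (Matrix.of fun a b => N (p.1, a) (q.1, b)) := rfl
    rw [h, map_add]
    rfl
  map_smul' c M := by
    ext p q
    show Φ (Matrix.of fun a b => (c • M) (p.1, a) (q.1, b)) p.2 q.2 = _
    have h : (Matrix.of fun a b => (c • M) (p.1, a) (q.1, b)) =
        c • (Matrix.of fun a b => M (p.1, a) (q.1, b)) := rfl
    rw [h, map_smul]
    rfl

/-- `Φ ⊗ id_k` as a linear map. -/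
def blockApplyRightL (k : Type) (Φ : Matrix n n ℂ →ₗ[ℂ] Matrix m m ℂ) :
    Matrix (n × k) (n × k) ℂ →ₗ[ℂ] Matrix (m × k) (m × k) ℂ where
  toFun := blockApplyRight Φ
  map_add' M N := by
    ext p q
    show Φ (Matrix.of fun a b => (M + N) (a, p.2) (b, q.2)) p.1 q.1 = _
    have h : (Matrix.of fun a b => (M + N) (a, p.2) (b, q.2)) =
        (Matrix.of fun a b => M (a, p.2) (b, q.2)) +
          (Matrix.of fun a b => N (a, p.2) (b, q.2)) := rfl
    rw [h, map_add]
    rfl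
  map_smul' c M := by
    ext p q
    show Φ (Matrix.of fun a b => (c • M) (a, p.2) (b, q.2)) p.1 q.1 = _
    have h : (Matrix.of fun a b => (c • M) (a, p.2) (b, q.2)) =
        c • (Matrix.of fun a b => M (a, p.2) (b, q.2)) := rfl
    rw [h, map_smul]
    rfl

/-- Tensor product of two channels (Kronecker product action). -/
def tensorChannel {n₁ m₁ n₂ m₂ : Type}
    (E₁ : Matrix n₁ n₁ ℂ →ₗ[ℂ] Matrix m₁ m₁ ℂ) (E₂ : Matrix n₂ n₂ ℂ →ₗ[ℂ] Matrix m₂ m₂ ℂ) :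
    Matrix (n₁ × n₂) (n₁ × n₂) ℂ →ₗ[ℂ] Matrix (m₁ × m₂) (m₁ × m₂) ℂ :=
  (blockApplyRightL m₂ E₁).comp (blockApplyL n₁ E₂)

/-- Index type for `k`-fold tensor powers. -/
def tpow (ι : Type) : ℕ → Type
  | 0 => PUnit
  | (k+1) => tpow ι k × ι

def tpowFintype (ι : Type) [Fintype ι] : ∀ k : ℕ, Fintype (tpow ι k)
  | 0 => inferInstanceAs (Fintype PUnit)
  | (k+1) => letI := tpowFintype ι k; inferInstanceAs (Fintype (tpow ι k × ι))

instance (ι : Type) [Fintype ι] (k : ℕ) : Fintype (tpow ι k) := tpowFintype ι k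

def tpowDecEq (ι : Type) [DecidableEq ι] : ∀ k : ℕ, DecidableEq (tpow ι k)
  | 0 => inferInstanceAs (DecidableEq PUnit)
  | (k+1) => letI := tpowDecEq ι k; inferInstanceAs (DecidableEq (tpow ι k × ι))

instance (ι : Type) [DecidableEq ι] (k : ℕ) : DecidableEq (tpow ι k) := tpowDecEq ι k

/-- `k`-fold Kronecker tensor power of a matrix. -/
def tpowMat (ρ : Matrix n n ℂ) : ∀ k : ℕ, Matrix (tpow n k) (tpow n k) ℂ
  | 0 => 1
  | (k+1) => (tpowMat ρ k) ⊗ₖ ρ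

/-- `k`-fold tensor power of a channel. -/
def tpowChannel (Φ : Matrix n n ℂ →ₗ[ℂ] Matrix m m ℂ) :
    ∀ k : ℕ, Matrix (tpow n k) (tpow n k) ℂ →ₗ[ℂ] Matrix (tpow m k) (tpow m k) ℂ
  | 0 => LinearMap.id
  | (k+1) => tensorChannel (tpowChannel Φ k) Φ

/-- Channel divergence induced by a divergence `𝔇` on states:
sup over `k ≥ 1` and input states `ν` on `ℂ^k ⊗ ℂ^d`. -/
def chDiv (𝔇 : ∀ (p : Type) [Fintype p] [DecidableEq p], Matrix p p ℂ → Matrix p p ℂ → EReal)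
    (E F : Matrix n n ℂ →ₗ[ℂ] Matrix m m ℂ) : EReal :=
  ⨆ (k : ℕ) (_ : 1 ≤ k) (ν : Matrix (Fin k × n) (Fin k × n) ℂ) (_ : IsState ν),
    𝔇 (Fin k × m) (blockApply E ν) (blockApply F ν)

/-- The geometric Rényi divergence as a divergence family. -/
def geomD (α : ℝ) : ∀ (p : Type) [Fintype p] [DecidableEq p],
    Matrix p p ℂ → Matrix p p ℂ → EReal :=
  fun _ _ _ => geomRenyi α

/-- The Umegaki relative entropy as a divergence family. -/
def relD : ∀ (p : Type) [Fintype p] [DecidableEq p],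
    Matrix p p ℂ → Matrix p p ℂ → EReal :=
  fun _ _ _ => relEntropy

/-- The hypothesis testing divergence as a divergence family. -/
def dHD (ε : ℝ) : ∀ (p : Type) [Fintype p] [DecidableEq p],
    Matrix p p ℂ → Matrix p p ℂ → EReal :=
  fun _ _ _ => dH ε

/-- Regularized channel relative entropy. -/
def regRelEntropy (E F : Matrix n n ℂ →ₗ[ℂ] Matrix m m ℂ) : EReal :=
  ⨆ (k : ℕ) (_ : 1 ≤ k),
    (((k : ℝ)⁻¹ : ℝ) : EReal) * chDiv relD (tpowChannel E k) (tpowChannel F k)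

end QCD

namespace QCD

section Aux

variable {n : Type} [Fintype n] [DecidableEq n]

open scoped MatrixOrder

set_option linter.unusedSectionVars false

lemma mf_eq (f : ℝ → ℝ) (A : Matrix n n ℂ) : matFun f A = cfc f A := by
  unfold matFun
  split_ifs with hA
  · rw [hA.cfc_eq]
    simp only [Matrix.IsHermitian.cfc, Unitary.conjStarAlgAut_apply]
    rfl
  · exact (cfc_apply_of_not_predicate A hA).symm

lemma cont_spec (f : ℝ → ℝ) (A : Matrix n n ℂ) : ContinuousOn f (spectrum ℝ A) :=
  (A.finite_real_spectrum).continuousOn f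

lemma mf_mul (f g : ℝ → ℝ) (A : Matrix n n ℂ) :
    matFun f A * matFun g A = matFun (fun x => f x * g x) A := by
  simp only [mf_eq]
  exact (cfc_mul f g A (cont_spec _ _) (cont_spec _ _)).symm

lemma mf_add (f g : ℝ → ℝ) (A : Matrix n n ℂ) :
    matFun f A + matFun g A = matFun (fun x => f x + g x) A := by
  simp only [mf_eq]
  exact (cfc_add A f g (cont_spec _ _) (cont_spec _ _)).symm

lemma mf_sub (f g : ℝ → ℝ) (A : Matrix n n ℂ) :
    matFun f A - matFun g A = matFun (fun x => f x - g x) A := by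
  simp only [mf_eq]
  exact (cfc_sub f g A (cont_spec _ _) (cont_spec _ _)).symm

lemma mf_id {A : Matrix n n ℂ} (hA : A.IsHermitian) : matFun (fun x => x) A = A := by
  rw [mf_eq]; exact cfc_id' ℝ A hA

lemma mf_one {A : Matrix n n ℂ} (hA : A.IsHermitian) : matFun (fun _ => 1) A = 1 := by
  rw [mf_eq]; exact cfc_const_one ℝ A hA

lemma mf_congr {f g : ℝ → ℝ} {A : Matrix n n ℂ} (hA : A.PosSemidef)
    (h : ∀ x, 0 ≤ x → f x = g x) : matFun f A = matFun g A := by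
  simp only [mf_eq]
  apply cfc_congr
  intro x hx
  exact h x (spectrum_nonneg_of_nonneg hA.nonneg hx)

lemma mf_psd {f : ℝ → ℝ} {A : Matrix n n ℂ} (h : ∀ x, 0 ≤ f x) : (matFun f A).PosSemidef := by
  rw [← Matrix.nonneg_iff_posSemidef, mf_eq]
  exact cfc_nonneg (fun x _ => h x)

lemma mf_psd' {f : ℝ → ℝ} {A : Matrix n n ℂ} (hA : A.PosSemidef) (h : ∀ x, 0 ≤ x → 0 ≤ f x) :
    (matFun f A).PosSemidef := by
  rw [mf_congr hA (g := fun x => |f x|) (fun x hx => (abs_of_nonneg (h x hx)).symm)]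
  exact mf_psd (fun x => abs_nonneg _)

lemma mf_herm (f : ℝ → ℝ) (A : Matrix n n ℂ) : (matFun f A).IsHermitian := by
  rw [mf_eq]; exact cfc_predicate f A

lemma mf_ct (f : ℝ → ℝ) (A : Matrix n n ℂ) : (matFun f A).conjTranspose = matFun f A :=
  mf_herm f A

lemma mpow_psd {A : Matrix n n ℂ} (hA : A.PosSemidef) (t : ℝ) : (mpow A t).PosSemidef := by
  apply mf_psd' hA
  intro x hx
  split_ifs
  · exact le_rfl
  · positivity

lemma mpow_mul {A : Matrix n n ℂ} (hA : A.PosSemidef) (s t : ℝ) :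
    mpow A s * mpow A t = mpow A (s + t) := by
  unfold mpow
  rw [mf_mul]
  apply mf_congr hA
  intro x hx
  split_ifs with h
  · simp
  · rw [Real.rpow_add (lt_of_le_of_ne hx (Ne.symm h))]

lemma mpow_one {A : Matrix n n ℂ} (hA : A.PosSemidef) : mpow A 1 = A := by
  unfold mpow
  rw [mf_congr hA (g := fun x => x), mf_id hA.1]
  intro x hx
  split_ifs with h
  · simp [h]
  · simp

open scoped Matrix.Norms.L2Operator in
lemma mpow_eq_rpow {A : Matrix n n ℂ} (hA : A.PosSemidef) {t : ℝ} (ht : 0 < t) :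
    mpow A t = A ^ t := by
  rw [CFC.rpow_eq_cfc_real hA.nonneg, ← mf_eq]
  apply mf_congr hA
  intro x hx
  split_ifs with h
  · rw [h, Real.zero_rpow ht.ne']
  · rfl

open scoped Matrix.Norms.L2Operator in
lemma mpow_mono {A B : Matrix n n ℂ} (hA : A.PosSemidef) (hB : B.PosSemidef)
    (h : (B - A).PosSemidef) {t : ℝ} (ht : 0 < t) (ht1 : t ≤ 1) :
    (mpow B t - mpow A t).PosSemidef := by
  rw [mpow_eq_rpow hA ht, mpow_eq_rpow hB ht]
  exact CFC.rpow_le_rpow (A := Matrix n n ℂ) ⟨ht.le, ht1⟩ (Matrix.le_iff.2 h)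

lemma rtr_add (A B : Matrix n n ℂ) : rtr (A + B) = rtr A + rtr B := by
  simp [rtr, Matrix.trace_add]

lemma rtr_sub (A B : Matrix n n ℂ) : rtr (A - B) = rtr A - rtr B := by
  simp [rtr, Matrix.trace_sub]

lemma rtr_comm (A B : Matrix n n ℂ) : rtr (A * B) = rtr (B * A) := by
  simp only [rtr]; rw [Matrix.trace_mul_comm]

lemma rtr_ct (A : Matrix n n ℂ) : rtr A.conjTranspose = rtr A := by
  simp [rtr, Matrix.trace_conjTranspose]

lemma rtr_nonneg {A : Matrix n n ℂ} (hA : A.PosSemidef) : 0 ≤ rtr A :=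
  (Complex.le_def.1 hA.trace_nonneg).1

lemma rtr_mul_nonneg {A B : Matrix n n ℂ} (hA : A.PosSemidef) (hB : B.PosSemidef) :
    0 ≤ rtr (A * B) := by
  have h : A = mpow A (1/2) * mpow A (1/2) := by
    rw [mpow_mul hA]; norm_num; exact (mpow_one hA).symm
  rw [h, mul_assoc, rtr_comm]
  apply rtr_nonneg
  have := hB.conjTranspose_mul_mul_same (mpow A (1/2))
  rwa [show (mpow A (1/2)).conjTranspose = mpow A (1/2) from mf_ct _ _] at this

/-- Cauchy–Schwarz for the Hilbert–Schmidt inner product. -/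
lemma rtr_cs (A B : Matrix n n ℂ) :
    rtr (A.conjTranspose * B) ^ 2 ≤ rtr (A.conjTranspose * A) * rtr (B.conjTranspose * B) := by
  have key : ∀ t : ℝ, 0 ≤ rtr (B.conjTranspose * B) * (t * t)
      + (2 * rtr (A.conjTranspose * B)) * t + rtr (A.conjTranspose * A) := by
    intro t
    have h := rtr_nonneg (Matrix.posSemidef_conjTranspose_mul_self (A + t • B))
    have e : rtr ((A + t • B).conjTranspose * (A + t • B)) = rtr (B.conjTranspose * B) * (t * t)
      + (2 * rtr (A.conjTranspose * B)) * t + rtr (A.conjTranspose * A) := by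
      have e1 : rtr (B.conjTranspose * A) = rtr (A.conjTranspose * B) := by
        rw [← rtr_ct]; simp
      have sm : ∀ M : Matrix n n ℂ, rtr (t • M) = t * rtr M := by
        intro M; simp [rtr, Matrix.trace_smul]
      simp only [Matrix.conjTranspose_add, Matrix.conjTranspose_smul, add_mul, mul_add, rtr_add,
        Matrix.smul_mul, Matrix.mul_smul, sm, star_trivial, e1]
      ring
    rwa [e] at h
  have := discrim_le_zero key
  unfold discrim at this
  nlinarith

lemma traceNorm_eq {Δ : Matrix n n ℂ} (h : Δ.IsHermitian) :
    traceNorm Δ = rtr (matFun (fun x => |x|) Δ) := by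
  unfold traceNorm msqrt
  rw [h.eq]
  have e : Δ * Δ = cfc (fun x : ℝ => x * x) Δ := by
    rw [← mf_eq, ← mf_mul, mf_id h]
  have e2 : cfc (fun x : ℝ => Real.sqrt (x * x)) Δ = cfc Real.sqrt (cfc (fun x : ℝ => x * x) Δ) :=
    cfc_comp' Real.sqrt (fun x : ℝ => x * x) Δ
      (Real.continuous_sqrt.continuousOn) (cont_spec _ _) h
  rw [mf_eq, mf_eq, e, ← e2]
  simp only [Real.sqrt_mul_self_eq_abs]

/-- The Audenaert trace inequality. -/
lemma audenaert {A B : Matrix n n ℂ} (hA : A.PosSemidef) (hB : B.PosSemidef) {s : ℝ}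
    (hs : 0 < s) (hs1 : s < 1) :
    (rtr A + rtr B - traceNorm (A - B)) / 2 ≤ rtr (mpow A (1 - s) * mpow B s) := by
  have hΔ : (A - B).IsHermitian := hA.1.sub hB.1
  set Δ := A - B with hdef
  set P := matFun (fun x => max x 0) Δ with hP
  have hPp : P.PosSemidef := mf_psd (fun x => le_max_right _ _)
  have hPΔ : (P - Δ).PosSemidef := by
    have : P - Δ = matFun (fun x => max x 0 - x) Δ := by rw [← mf_sub, mf_id hΔ]
    rw [this]; exact mf_psd (fun x => sub_nonneg.2 (le_max_left _ _))
  have hPt : 2 * rtr P = traceNorm Δ + rtr Δ := by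
    rw [traceNorm_eq hΔ, two_mul, ← rtr_add, hP, mf_add]
    have e : rtr Δ = rtr (matFun (fun x => x) Δ) := by rw [mf_id hΔ]
    rw [e, ← rtr_add, mf_add]
    congr 2
    funext x
    rcases le_total x 0 with h | h
    · rw [max_eq_right h, abs_of_nonpos h]; ring
    · rw [max_eq_left h, abs_of_nonneg h]
  set C := B + P with hC
  have hCp : C.PosSemidef := hB.add hPp
  have hCA : (C - A).PosSemidef := by
    have : C - A = P - Δ := by rw [hC, hdef]; abel
    rwa [this]
  have hCB : (C - B).PosSemidef := by
    have : C - B = P := by rw [hC]; abel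
    rwa [this]
  have m1 := mpow_mono hA hCp hCA hs hs1.le
  have m2 := mpow_mono hA hCp hCA (t := 1 - s) (by linarith) (by linarith)
  have m3 := mpow_mono hB hCp hCB hs hs1.le
  have m4 := mpow_mono hB hCp hCB (t := 1 - s) (by linarith) (by linarith)
  have i1 := rtr_mul_nonneg (mpow_psd hA (1 - s)) m1
  have i2 := rtr_mul_nonneg m2 m3
  have i3 := rtr_mul_nonneg m4 (mpow_psd hB s)
  have eA : rtr (mpow A (1 - s) * mpow A s) = rtr A := by
    rw [mpow_mul hA]; norm_num [mpow_one hA]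
  have eB : rtr (mpow B (1 - s) * mpow B s) = rtr B := by
    rw [mpow_mul hB]; norm_num [mpow_one hB]
  have eC : rtr (mpow C (1 - s) * mpow C s) = rtr B + rtr P := by
    rw [mpow_mul hCp]; norm_num [mpow_one hCp]; rw [hC, rtr_add]
  simp only [mul_sub, sub_mul, rtr_sub] at i1 i2 i3
  have hd : rtr Δ = rtr A - rtr B := rtr_sub _ _
  linarith

/-- Projection onto the support acts trivially. -/
lemma supp_proj {ρ σ : Matrix n n ℂ} (hρ : ρ.PosSemidef) (hσ : σ.PosSemidef)
    (h : SuppLE ρ σ) (t : ℝ) : mpow ρ t * mpow σ 0 = mpow ρ t := by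
  have h0 : σ * (1 - mpow σ 0) = 0 := by
    rw [mul_sub, mul_one]
    nth_rewrite 2 [← mpow_one hσ]
    rw [mpow_mul hσ, add_zero, mpow_one hσ, sub_self]
  have h1 : ρ * (1 - mpow σ 0) = 0 := by
    ext i j
    have hv := h (fun k => (1 - mpow σ 0) k j) (by
      ext a
      exact congrFun (congrFun h0 a) j)
    exact congrFun hv i
  have h2 : ρ * mpow σ 0 = ρ := by
    rw [mul_sub, mul_one, sub_eq_zero] at h1; exact h1.symm
  have h3 : mpow ρ t = mpow ρ (t - 1) * ρ := by
    nth_rewrite 3 [← mpow_one hρ]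
    rw [mpow_mul hρ]; congr 1; ring
  rw [h3, mul_assoc, h2]

lemma cs_bound {ρ₀ ρ₁ σ : Matrix n n ℂ} (h0 : ρ₀.PosSemidef) (h1 : ρ₁.PosSemidef)
    (hσ : σ.PosSemidef) (h : SuppLE ρ₀ σ) (α : ℝ) :
    rtr (mpow ρ₀ (1 - α / 2) * mpow ρ₁ (α / 2)) ^ 2 ≤
      rtr (mpow ρ₀ (2 - α) * mpow σ (1 - (2 - α))) * rtr (mpow ρ₁ α * mpow σ (1 - α)) := by
  have ct : ∀ (M : Matrix n n ℂ) (t : ℝ), (mpow M t).conjTranspose = mpow M t :=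
    fun M t => mf_ct _ _
  have key := rtr_cs (mpow σ ((α - 1) / 2) * mpow ρ₀ (1 - α / 2))
    (mpow σ ((1 - α) / 2) * mpow ρ₁ (α / 2))
  simp only [Matrix.conjTranspose_mul, ct] at key
  have e1 : mpow ρ₀ (1 - α / 2) * mpow σ ((α - 1) / 2) * (mpow σ ((1 - α) / 2) * mpow ρ₁ (α / 2))
      = mpow ρ₀ (1 - α / 2) * mpow ρ₁ (α / 2) := by
    rw [mul_assoc, ← mul_assoc (mpow σ _), mpow_mul hσ,
      show (α - 1) / 2 + (1 - α) / 2 = 0 by ring, ← mul_assoc, supp_proj h0 hσ h]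
  have e2 : rtr (mpow ρ₀ (1 - α / 2) * mpow σ ((α - 1) / 2) *
      (mpow σ ((α - 1) / 2) * mpow ρ₀ (1 - α / 2)))
      = rtr (mpow ρ₀ (2 - α) * mpow σ (1 - (2 - α))) := by
    rw [← mul_assoc, rtr_comm, mul_assoc (mpow ρ₀ _) (mpow σ _), mpow_mul hσ, ← mul_assoc,
      mpow_mul h0]
    congr 3 <;> ring
  have e3 : rtr (mpow ρ₁ (α / 2) * mpow σ ((1 - α) / 2) *
      (mpow σ ((1 - α) / 2) * mpow ρ₁ (α / 2)))
      = rtr (mpow ρ₁ α * mpow σ (1 - α)) := by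
    rw [← mul_assoc, rtr_comm, mul_assoc (mpow ρ₁ _) (mpow σ _), mpow_mul hσ, ← mul_assoc,
      mpow_mul h1]
    congr 3 <;> ring
  rwa [e1, e2, e3] at key

/-- Fuchs–van de Graaf upper bound. -/
lemma fvdg {ρ σ : Matrix n n ℂ} (hρ : IsState ρ) (hσ : IsState σ) :
    traceNorm (ρ - σ) / 2 ≤ sineDist ρ σ := by
  have hΔ : (ρ - σ).IsHermitian := hρ.1.1.sub hσ.1.1
  have hsq : ∀ A : Matrix n n ℂ, A.PosSemidef → msqrt A * msqrt A = A := by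
    intro A hA
    unfold msqrt
    rw [mf_mul, mf_congr hA (g := fun x => x) (fun x hx => Real.mul_self_sqrt hx), mf_id hA.1]
  have hct : ∀ A : Matrix n n ℂ, (msqrt A).conjTranspose = msqrt A := fun A => mf_ct _ _
  set X := msqrt ρ with hX
  set R := msqrt σ with hR
  set G := R * ρ * R with hG
  have hGX : G = (X * R).conjTranspose * (X * R) := by
    rw [Matrix.conjTranspose_mul, hct, hct, hG]
    calc R * ρ * R = R * (X * X) * R := by rw [hsq ρ hρ.1]
      _ = _ := by simp only [mul_assoc, hX, hR]
  have hGp : G.PosSemidef := by rw [hGX]; exact Matrix.posSemidef_conjTranspose_mul_self _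
  set N := mpow G (-(1/2)) with hN
  have hNct : N.conjTranspose = N := mf_ct _ _
  set Q := mpow G 0 with hQ
  have hQct : Q.conjTranspose = Q := mf_ct _ _
  have hQQ : Q * Q = Q := by rw [hQ, mpow_mul hGp, add_zero]
  have hNGN : N * G * N = Q := by
    nth_rewrite 1 [← mpow_one hGp]
    rw [hN, mpow_mul hGp, mpow_mul hGp, hQ]; congr 1; norm_num
  set f := rtr (msqrt G) with hf
  have hGN : rtr (G * N) = f := by
    nth_rewrite 1 [← mpow_one hGp]
    rw [hN, mpow_mul hGp, hf]
    congr 1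
    unfold mpow msqrt
    apply mf_congr hGp
    intro x hx
    split_ifs with h
    · simp [h]
    · rw [Real.sqrt_eq_rpow]; norm_num
  -- the contraction K
  set K := N * (R * X) with hK
  have hKK : K * K.conjTranspose = Q := by
    rw [hK, Matrix.conjTranspose_mul, Matrix.conjTranspose_mul, hct, hct, hNct, ← hNGN, hG]
    calc N * (R * X) * (X * R * N) = N * (R * (X * X) * R) * N := by simp only [mul_assoc]
      _ = _ := by rw [hsq ρ hρ.1]
  set Y := R * K with hY
  set V := R * (1 - Q) with hV
  have hXX : X * X.conjTranspose = ρ := by rw [hct, hsq ρ hρ.1]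
  have hYV : Y * Y.conjTranspose + V * V.conjTranspose = σ := by
    have a1 : Y * Y.conjTranspose = R * Q * R := by
      rw [hY, Matrix.conjTranspose_mul, hct, ← hKK]; simp only [mul_assoc, hR]
    have a2 : V * V.conjTranspose = R * (1 - Q) * R := by
      rw [hV, Matrix.conjTranspose_mul, hct, Matrix.conjTranspose_sub, hQct,
        Matrix.conjTranspose_one]
      have : (1 - Q) * (1 - Q) = 1 - Q := by
        simp only [mul_sub, sub_mul, hQQ, mul_one, one_mul]; abel
      calc R * (1 - Q) * ((1 - Q) * R) = R * ((1 - Q) * (1 - Q)) * R := by simp only [mul_assoc]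
        _ = _ := by rw [this]
    rw [a1, a2, ← add_mul, ← mul_add, add_sub_cancel, mul_one, hsq σ hσ.1]
  have hXY : rtr (X.conjTranspose * Y) = f := by
    rw [hct, hY, hK, ← hGN]
    calc rtr (X * (R * (N * (R * X)))) = rtr ((X * R * N) * (R * X)) := by simp only [mul_assoc]
      _ = rtr ((R * X) * (X * R * N)) := rtr_comm _ _
      _ = rtr (R * (X * X) * R * N) := by simp only [mul_assoc]
      _ = _ := by rw [hsq ρ hρ.1]
  -- the sign unitary
  set S := matFun (fun x => if 0 ≤ x then 1 else -1) (ρ - σ) with hS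
  have hSct : S.conjTranspose = S := mf_ct _ _
  have hSS : S * S = 1 := by
    rw [hS, mf_mul, ← mf_one hΔ]
    congr 1; funext x; split_ifs <;> norm_num
  have hT : traceNorm (ρ - σ) = rtr (S * (ρ - σ)) := by
    rw [traceNorm_eq hΔ]
    have e : S * (ρ - σ) = S * matFun (fun x => x) (ρ - σ) := by rw [mf_id hΔ]
    rw [e, hS, mf_mul]
    congr 2; funext x; split_ifs with h
    · rw [abs_of_nonneg h]; ring
    · rw [abs_of_neg (not_le.1 h)]; ring
  have trst : ∀ A : Matrix n n ℂ, IsState A → rtr A = 1 := by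
    intro A hA; simp [rtr, hA.2]
  set x2 := rtr (X.conjTranspose * X)
  set y2 := rtr (Y.conjTranspose * Y)
  set v2 := rtr (V.conjTranspose * V)
  have hx : x2 = 1 := by
    show rtr (X.conjTranspose * X) = 1
    rw [rtr_comm, hXX, trst ρ hρ]
  have hyv : y2 + v2 = 1 := by
    show rtr (Y.conjTranspose * Y) + rtr (V.conjTranspose * V) = 1
    rw [rtr_comm Y.conjTranspose, rtr_comm V.conjTranspose, ← rtr_add, hYV, trst σ hσ]
  have hYX : rtr (Y.conjTranspose * X) = f := by rw [← hXY, ← rtr_ct]; simp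
  have cs1 := rtr_cs (X + Y) (S * (X - Y))
  have cs2 := rtr_cs V (S * V)
  have hSinv : ∀ Z : Matrix n n ℂ, (S * Z).conjTranspose * (S * Z) = Z.conjTranspose * Z := by
    intro Z
    rw [Matrix.conjTranspose_mul, hSct, mul_assoc, ← mul_assoc S S, hSS, one_mul]
  rw [hSinv] at cs1 cs2
  have b1 : rtr ((X + Y).conjTranspose * (X + Y)) = x2 + y2 + 2 * f := by
    simp only [Matrix.conjTranspose_add, add_mul, mul_add, rtr_add, hXY, hYX]
    ring
  have b2 : rtr ((X - Y).conjTranspose * (X - Y)) = x2 + y2 - 2 * f := by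
    simp only [Matrix.conjTranspose_sub, sub_mul, mul_sub, rtr_sub, hXY, hYX]
    ring
  have b3 : rtr ((X + Y).conjTranspose * (S * (X - Y)))
      = rtr (S * (X * X.conjTranspose)) - rtr (S * (Y * Y.conjTranspose)) := by
    have c1 : rtr (X.conjTranspose * (S * Y)) = rtr (Y.conjTranspose * (S * X)) := by
      rw [← rtr_ct]; simp [hSct, mul_assoc]
    have c2 : ∀ Z : Matrix n n ℂ, rtr (Z.conjTranspose * (S * Z)) = rtr (S * (Z * Z.conjTranspose)) := by
      intro Z; rw [rtr_comm, mul_assoc]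
    simp only [Matrix.conjTranspose_add, add_mul, mul_sub, rtr_sub, rtr_add, c1, c2]
    ring
  have b4 : rtr (V.conjTranspose * (S * V)) = rtr (S * (V * V.conjTranspose)) := by
    rw [rtr_comm, mul_assoc]
  rw [b1, b2, b3] at cs1
  rw [b4] at cs2
  have hT2 : traceNorm (ρ - σ) = (rtr (S * (X * X.conjTranspose)) - rtr (S * (Y * Y.conjTranspose)))
      - rtr (S * (V * V.conjTranspose)) := by
    rw [hT, mul_sub, rtr_sub, hXX, ← hYV, mul_add, rtr_add]; ring
  have p1 : 0 ≤ x2 + y2 + 2 * f := by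
    rw [← b1]; exact rtr_nonneg (Matrix.posSemidef_conjTranspose_mul_self _)
  have p2 : 0 ≤ x2 + y2 - 2 * f := by
    rw [← b2]; exact rtr_nonneg (Matrix.posSemidef_conjTranspose_mul_self _)
  have p3 : 0 ≤ v2 := rtr_nonneg (Matrix.posSemidef_conjTranspose_mul_self _)
  generalize (rtr (S * (X * X.conjTranspose)) - rtr (S * (Y * Y.conjTranspose))) = a at *
  generalize rtr (S * (V * V.conjTranspose)) = b at *
  have fin : traceNorm (ρ - σ) ^ 2 ≤ (x2 + y2 + 2 * f + v2) * (x2 + y2 - 2 * f + v2) := by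
    rw [hT2]
    generalize x2 + y2 + 2 * f = p at *
    generalize x2 + y2 - 2 * f = q at *
    have hb : |b| ≤ v2 := abs_le_of_sq_le_sq (by nlinarith) p3
    have ha : |a| ≤ Real.sqrt (p * q) := Real.abs_le_sqrt cs1
    have hr : Real.sqrt (p * q) ≤ (p + q) / 2 := by
      rw [Real.sqrt_le_left (by linarith)]; nlinarith [sq_nonneg (p - q)]
    have hab : |a - b| ≤ Real.sqrt (p * q) + v2 := (abs_sub a b).trans (add_le_add ha hb)
    have hs := Real.sq_sqrt (mul_nonneg p1 p2)
    have h4 : (a - b) ^ 2 ≤ (Real.sqrt (p * q) + v2) ^ 2 := by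
      rw [← sq_abs (a - b)]; exact pow_le_pow_left₀ (abs_nonneg _) hab 2
    nlinarith [mul_le_mul_of_nonneg_left hr p3]
  have hfid : fidelity ρ σ = f ^ 2 := rfl
  unfold sineDist
  rw [hfid]
  apply Real.le_sqrt_of_sq_le
  have q1 : x2 + y2 + 2 * f + v2 = 2 + 2 * f := by linarith
  have q2 : x2 + y2 - 2 * f + v2 = 2 - 2 * f := by linarith
  rw [q1, q2] at fin
  nlinarith

lemma elog_mono {x y : ℝ} (h : x ≤ y) : elog x ≤ elog y := by
  unfold elog
  split_ifs with h1 h2 h2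
  · exact le_rfl
  · exact bot_le
  · exact absurd (h.trans h2) h1
  · rw [EReal.coe_le_coe_iff]
    exact Real.logb_le_logb_of_le (by norm_num) (not_le.1 h1) h

lemma main_ineq {ρ₀ ρ₁ σ : Matrix n n ℂ} (hρ₀ : IsState ρ₀) (hρ₁ : IsState ρ₁) (hσ : IsState σ)
    (h : SuppLE ρ₀ σ) {α : ℝ} (hα : 0 < α ∧ α < 1) (hT : 0 < 1 - traceNorm (ρ₀ - ρ₁) / 2) :
    (1 - traceNorm (ρ₀ - ρ₁) / 2) ^ 2 ≤
      rtr (mpow ρ₀ (2 - α) * mpow σ (1 - (2 - α))) * rtr (mpow ρ₁ α * mpow σ (1 - α)) := by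
  refine le_trans ?_ (cs_bound hρ₀.1 hρ₁.1 hσ.1 h α)
  have a := audenaert hρ₀.1 hρ₁.1 (s := α / 2) (by linarith [hα.1]) (by linarith [hα.2])
  have t0 : rtr ρ₀ = 1 := by simp [rtr, hρ₀.2]
  have t1 : rtr ρ₁ = 1 := by simp [rtr, hρ₁.2]
  rw [t0, t1] at a
  exact pow_le_pow_left₀ hT.le (by linarith) 2

end Aux

/-- Rényi-divergence difference bounded by trace distance. -/
theorem petzRenyi_diff_traceDist_bound {d : ℕ} (ρ₀ ρ₁ σ : Matrix (Fin d) (Fin d) ℂ)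
    (hρ₀ : IsState ρ₀) (hρ₁ : IsState ρ₁) (hσ : IsState σ) (hsupp : SuppLE ρ₁ σ)
    (α : ℝ) (hα : 0 < α ∧ α < 1) :
    ((2 / (1 - α) : ℝ) : EReal) * elog (1 - traceNorm (ρ₀ - ρ₁) / 2) ≤
        petzRenyi (2 - α) ρ₀ σ - petzRenyi α ρ₁ σ ∧
    ((2 / (1 - α) : ℝ) : EReal) * elog (1 - sineDist ρ₀ ρ₁) ≤
        ((2 / (1 - α) : ℝ) : EReal) * elog (1 - traceNorm (ρ₀ - ρ₁) / 2) := by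
  have hc : 0 < 1 - α := by linarith [hα.2]
  constructor
  · by_cases hT : 1 - traceNorm (ρ₀ - ρ₁) / 2 ≤ 0
    · have : elog (1 - traceNorm (ρ₀ - ρ₁) / 2) = ⊥ := by simp [elog, hT]
      rw [this, EReal.coe_mul_bot_of_pos (by positivity)]
      exact bot_le
    push Not at hT
    have n1 : 0 ≤ rtr (mpow ρ₁ α * mpow σ (1 - α)) :=
      rtr_mul_nonneg (mpow_psd hρ₁.1 _) (mpow_psd hσ.1 _)
    have hz : traceNorm (ρ₁ - ρ₁) = 0 := by
      rw [traceNorm_eq (hρ₁.1.1.sub hρ₁.1.1), mf_eq, sub_self]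
      rw [cfc_apply_zero]; simp [rtr]
    have q1 : 0 < rtr (mpow ρ₁ α * mpow σ (1 - α)) := by
      have := main_ineq hρ₁ hρ₁ hσ hsupp hα (by rw [hz]; norm_num)
      rw [hz] at this
      refine lt_of_le_of_ne n1 (fun h => ?_)
      rw [← h] at this; norm_num at this
    have e1 : petzRenyi α ρ₁ σ =
        (((α - 1)⁻¹ * Real.logb 2 (rtr (mpow ρ₁ α * mpow σ (1 - α))) : ℝ) : EReal) := by
      unfold petzRenyi elog
      rw [if_neg (by intro h; linarith [h.1, hα.2]), if_neg (not_le.2 q1), EReal.coe_mul]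
    have eL : elog (1 - traceNorm (ρ₀ - ρ₁) / 2) =
        ((Real.logb 2 (1 - traceNorm (ρ₀ - ρ₁) / 2) : ℝ) : EReal) := by
      unfold elog; rw [if_neg (not_le.2 hT)]
    rw [e1, eL]
    by_cases hs : SuppLE ρ₀ σ
    · have m := main_ineq hρ₀ hρ₁ hσ hs hα hT
      have q0 : 0 < rtr (mpow ρ₀ (2 - α) * mpow σ (1 - (2 - α))) := by
        by_contra hn
        have : (0:ℝ) < (1 - traceNorm (ρ₀ - ρ₁) / 2) ^ 2 := by positivity
        nlinarith
      have e0 : petzRenyi (2 - α) ρ₀ σ = (((2 - α - 1)⁻¹ *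
          Real.logb 2 (rtr (mpow ρ₀ (2 - α) * mpow σ (1 - (2 - α)))) : ℝ) : EReal) := by
        unfold petzRenyi elog
        rw [if_neg (fun h => h.2 hs), if_neg (not_le.2 q0), EReal.coe_mul]
      rw [e0, ← EReal.coe_mul, ← EReal.coe_sub, EReal.coe_le_coe_iff]
      have l := Real.logb_le_logb_of_le (b := 2) (by norm_num) (by positivity) m
      rw [Real.logb_mul q0.ne' q1.ne', Real.logb_pow] at l
      have i1 : (α - 1)⁻¹ = -(1 - α)⁻¹ := by rw [← inv_neg, neg_sub]
      have i2 : (2 - α - 1)⁻¹ = (1 - α)⁻¹ := by congr 1; ring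
      rw [i1, i2, div_eq_mul_inv]
      have := mul_le_mul_of_nonneg_left l (inv_nonneg.2 hc.le)
      push_cast at this
      nlinarith
    · have e0 : petzRenyi (2 - α) ρ₀ σ = ⊤ := by
        unfold petzRenyi
        rw [if_pos ⟨by linarith [hα.2], hs⟩]
      rw [e0, EReal.top_sub_coe]
      exact le_top
  · apply mul_le_mul_of_nonneg_left
    · exact elog_mono (by linarith [fvdg hρ₀ hρ₁])
    · exact_mod_cast (by positivity : (0:ℝ) ≤ 2 / (1 - α))

end QCD
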